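/- For every odd n ≥ 3, every occurrence of the string 0 · 1 · 0^{n−2} · 1 in S_n = db(n)^n that has a following bit inside S_n is followed by the bit 1; moreover, 0 · 1 · 0^{n−2} · 1 occurs exactly n times in S_n viewed cyclically (i.e., as a substring of S_n ++ S_n[0..n−1]). -/

import Mathlib

/-- `occ w x`: the number of indices `i` with `x[i..i+|w|-1] = w`,
i.e. the number of occurrences of `w` as a substring of `x`. -/
def occ (w x : List Bool) : ℕ :=
  ((List.range (x.length + 1 - w.length)).filter
    (fun i => decide ((x.drop i).take w.length = w))).length

/-- `occB w x`: the number of occurrences of `w` as a substring of `x`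
starting at a position divisible by `|w|` (aligned block occurrences). -/
def occB (w x : List Bool) : ℕ :=
  ((List.range (x.length + 1 - w.length)).filter
    (fun i => decide (i % w.length = 0) && decide ((x.drop i).take w.length = w))).length

/-- `x` is a de Bruijn string of order `n`: it has length `2^n` and every binary
string of length `n` occurs exactly once as a substring of `x ++ x[0..n-2]`. -/
def IsDeBruijn (n : ℕ) (x : List Bool) : Prop :=
  x.length = 2 ^ n ∧ ∀ w : List Bool, w.length = n → occ w (x ++ x.take (n - 1)) = 1

open Classical in
/-- `db n` is the lexicographically least de Bruijn string of order `n`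
(using the lexicographic order on `List Bool`, with `false < true`);
`[]` if none exists. -/
noncomputable def db (n : ℕ) : List Bool :=
  if h : ∃ x : List Bool, IsDeBruijn n x ∧ ∀ y, IsDeBruijn n y → x ≤ y then h.choose else []

/-- The block `B_{n,i} = db_i(n)^t`: `t` copies of the cyclic left shift of `db n` by `i`. -/
noncomputable def Bblk (n t i : ℕ) : List Bool := (List.replicate t ((db n).rotate i)).flatten

/-- The odd part `t` of `n = 2^s * t`. -/
def oddPart (n : ℕ) : ℕ := n / 2 ^ (n.factorization 2)

/-- `Sblk n` is the string `S_n = B_{n,0} B_{n,1} ⋯ B_{n,2^s-1}` where `n = 2^s * t`, `t` odd. -/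
noncomputable def Sblk (n : ℕ) : List Bool :=
  ((List.range (2 ^ (n.factorization 2))).map (fun i => Bblk n (oddPart n) i)).flatten

/-- `Sfin m = S_1 S_2 ⋯ S_m`. -/
noncomputable def Sfin (m : ℕ) : List Bool := ((List.range m).map (fun k => Sblk (k + 1))).flatten

/-- The infinite sequence `S = S_1 S_2 S_3 ⋯`, as a function giving its `i`-th bit. -/
noncomputable def Sseq (i : ℕ) : Bool := (Sfin (i + 1)).getD i false

/-- For odd `n`, `S_n = db(n)^n`. -/
noncomputable def Sodd (n : ℕ) : List Bool := (List.replicate n (db n)).flatten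

/-!
Let `N = 2^n`. The prefer-zero greedy de Bruijn string is, up to rotation, a de Bruijn string that
starts with `0^n 1 0^(n - 2)`. No de Bruijn string starts with anything smaller, because `0^(n + 1)`
would repeat `0^n`; hence `db n` starts with `0^n 1 0^(n - 2)` too.

Now read `db n` cyclically. The words `0^n`, `0^(n - 2) 1 0`, `0 1 0^(n - 2)` and `1 0^(n - 1)`
occur at the positions `0`, `2`, `n - 1` and `N - 1`, and nowhere else modulo `N`. After an
occurrence of `0 1 0^(n - 2)` at position `i`, which is `n - 1` modulo `N`, the next bit is `1`,
since otherwise `1 0^(n - 1)` would occur at `i + 1`, and the bit after that is `1` as well, since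
otherwise `0^(n - 2) 1 0` would occur at `i + 2`. So `0 1 0^(n - 2) 1` occurs exactly where
`0 1 0^(n - 2)` does, that is, once per period, and is followed by `1`.
-/

section Window

/-- The factor `a s, a (s + 1), …, a (s + m - 1)` of length `m` at position `s` of an infinite
binary sequence. -/
def window (a : ℕ → Bool) (s m : ℕ) : List Bool := (List.range m).map fun k => a (s + k)

variable {a b : ℕ → Bool} {s t m : ℕ} {w : List Bool} {c : Bool}

@[simp]
lemma length_window : (window a s m).length = m := by simp [window]

lemma window_eq_window_iff : window a s m = window b t m ↔ ∀ k < m, a (s + k) = b (t + k) := by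
  simp [window]

lemma window_eq_replicate_iff : window a s m = List.replicate m c ↔ ∀ k < m, a (s + k) = c := by
  simp [window, List.eq_replicate_iff]

lemma window_add (k : ℕ) : window a s (k + m) = window a s k ++ window a (s + k) m := by
  simp [window, List.range_add, Function.comp_def, add_assoc]

lemma window_succ : window a s (m + 1) = window a s m ++ [a (s + m)] := by
  simp [window, List.range_succ]

lemma window_succ' : window a s (m + 1) = a s :: window a (s + 1) m := by
  simp [window, List.range_succ_eq_map, Function.comp_def, add_right_comm, add_assoc]

lemma window_succ_eq_append_iff :
    window a s (m + 1) = w ++ [c] ↔ window a s m = w ∧ a (s + m) = c := by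
  rw [window_succ, ← List.concat_eq_append, ← List.concat_eq_append, List.concat_inj]

lemma window_succ_eq_cons_iff :
    window a s (m + 1) = c :: w ↔ a s = c ∧ window a (s + 1) m = w := by
  rw [window_succ', List.cons.injEq]

lemma take_drop_eq_window {z : List Bool} (hz : ∀ i < z.length, z.getD i false = a i)
    (h : s + m ≤ z.length) : (z.drop s).take m = window a s m := by
  refine List.ext_getElem (by simp; omega) fun k h₁ h₂ => ?_
  have hk : s + k < z.length := by simp at h₂; omega
  simp [window, ← hz _ hk, hk]

lemma periodic_window {N : ℕ} (ha : Function.Periodic a N) :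
    Function.Periodic (window a · m) N := fun s =>
  window_eq_window_iff.2 fun k _ => by rw [add_right_comm, ha]

end Window

section Count

variable {p : ℕ → Prop} [DecidablePred p] {N : ℕ}

lemma count_eq_one_iff_existsUnique : Nat.count p N = 1 ↔ ∃! i, i < N ∧ p i := by
  simp only [Nat.count_eq_card_filter_range, Finset.card_eq_one_iff_existsUnique,
    Finset.mem_filter, Finset.mem_range]

lemma count_mul_of_periodic (hp : Function.Periodic p N) (t : ℕ) :
    Nat.count p (t * N) = t * Nat.count p N := by
  induction t with
  | zero => simp
  | succ t ih =>
    have hshift : (fun k => p (t * N + k)) = p :=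
      funext fun k => by simpa [add_comm] using hp.nat_mul t k
    simp only [add_mul, one_mul, Nat.count_add, ih, hshift]

lemma count_add_left_of_periodic (hp : Function.Periodic p N) (r : ℕ) :
    Nat.count (fun i => p (r + i)) N = Nat.count p N := by
  have hshift : (fun k => p (N + k)) = p := funext fun k => by rw [add_comm, hp]
  have h := Nat.count_add p r N
  simp only [add_comm r N, Nat.count_add, hshift] at h
  omega

end Count

section PeriodicExt

/-- The infinite sequence `x x x ⋯`: a cyclic factor of `x` is a window of this sequence. -/
def periodicExt (x : List Bool) (i : ℕ) : Bool := x.getD (i % x.length) false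

variable {x w : List Bool} {m : ℕ}

lemma periodicExt_periodic (x : List Bool) : Function.Periodic (periodicExt x) x.length :=
  fun i => by simp [periodicExt]

lemma getD_eq_periodicExt {i : ℕ} (hi : i < x.length) : x.getD i false = periodicExt x i := by
  rw [periodicExt, Nat.mod_eq_of_lt hi]

lemma prefix_iff_window_periodicExt :
    w <+: x ↔ w.length ≤ x.length ∧ window (periodicExt x) 0 w.length = w := by
  have htake (h : w.length ≤ x.length) : window (periodicExt x) 0 w.length = x.take w.length := by
    rw [← take_drop_eq_window (fun i => getD_eq_periodicExt) (by simpa using h), List.drop_zero]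
  rw [List.prefix_iff_eq_take]
  refine ⟨fun h => ?_, fun ⟨hle, h⟩ => h.symm.trans (htake hle)⟩
  have hle : w.length ≤ x.length := (List.prefix_iff_eq_take.2 h).length_le
  exact ⟨hle, (htake hle).trans h.symm⟩

lemma periodicExt_rotate (x : List Bool) (r i : ℕ) :
    periodicExt (x.rotate r) i = periodicExt x (r + i) := by
  rcases x.length.eq_zero_or_pos with hx | hx
  · simp [List.eq_nil_of_length_eq_zero hx, periodicExt]
  · simp [periodicExt, List.getElem?_rotate (Nat.mod_lt i hx), add_comm]

lemma getD_flatten_replicate (t : ℕ) {i : ℕ} (hi : i < t * x.length) :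
    (List.replicate t x).flatten.getD i false = periodicExt x i := by
  induction t generalizing i with
  | zero => omega
  | succ t ih =>
    rw [List.replicate_succ, List.flatten_cons]
    rcases lt_or_ge i x.length with h | h
    · rw [List.getD_append _ _ _ _ h, getD_eq_periodicExt h]
    · rw [List.getD_append_right _ _ _ _ h, ih (by rw [add_mul] at hi; omega),
        ← periodicExt_periodic x, Nat.sub_add_cancel h]

lemma occ_eq_count {a : ℕ → Bool} {z : List Bool} (hz : ∀ i < z.length, z.getD i false = a i) :
    occ w z = Nat.count (fun i => window a i w.length = w) (z.length + 1 - w.length) := by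
  rw [occ, ← List.countP_eq_length_filter, Nat.count]
  refine List.countP_congr fun i hi => ?_
  rw [List.mem_range] at hi
  rw [take_drop_eq_window hz (by omega)]

lemma occ_flatten_replicate_append_take (t : ℕ) (hw : w.length = m + 1) (hm : m ≤ x.length) :
    occ w ((List.replicate t x).flatten ++ (List.replicate t x).flatten.take m) =
      t * Nat.count (fun i => window (periodicExt x) i (m + 1) = w) x.length := by
  set X := (List.replicate t x).flatten with hX
  have hXl : X.length = t * x.length := by simp [hX]
  have hXX : X ++ X.take m = ((List.replicate (t + t) x).flatten).take (X.length + m) := by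
    rw [List.replicate_add, List.flatten_append, List.take_length_add_append]
  have hbits : ∀ i < (X ++ X.take m).length, (X ++ X.take m).getD i false = periodicExt x i := by
    intro i hi
    rw [hXX] at hi ⊢
    rw [List.length_take, lt_min_iff] at hi
    rw [← getD_flatten_replicate (t + t) (by simpa using hi.2)]
    simp [hi.1]
  have hlen : (X ++ X.take m).length + 1 - w.length = t * x.length := by
    rcases t.eq_zero_or_pos with rfl | ht
    · simp [hX, hw]
    · have := Nat.le_mul_of_pos_left x.length ht
      simp only [List.length_append, List.length_take]
      omega
  rw [occ_eq_count hbits, hlen, hw]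
  exact count_mul_of_periodic
    (fun i => congrArg (· = w) (periodic_window (periodicExt_periodic x) i)) t

end PeriodicExt

section IsDeBruijn

variable {n : ℕ} {x : List Bool}

lemma isDeBruijn_iff_count (hn : 0 < n) :
    IsDeBruijn n x ↔ x.length = 2 ^ n ∧ ∀ w : List Bool, w.length = n →
      Nat.count (fun i => window (periodicExt x) i n = w) x.length = 1 := by
  obtain ⟨d, rfl⟩ : ∃ d, n = d + 1 := ⟨n - 1, by omega⟩
  refine and_congr_right fun hx => forall₂_congr fun w hw => ?_
  have hd : d ≤ x.length := by have := @Nat.lt_two_pow_self (d + 1); omega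
  have h := occ_flatten_replicate_append_take 1 hw hd
  rw [List.replicate_one, List.flatten_singleton, one_mul] at h
  rw [← h, Nat.add_sub_cancel]

lemma IsDeBruijn.count_window (hx : IsDeBruijn n x) (hn : 0 < n) {w : List Bool}
    (hw : w.length = n) : Nat.count (fun i => window (periodicExt x) i n = w) x.length = 1 :=
  ((isDeBruijn_iff_count hn).1 hx).2 w hw

lemma IsDeBruijn.rotate (hx : IsDeBruijn n x) (hn : 0 < n) (r : ℕ) :
    IsDeBruijn n (x.rotate r) := by
  refine (isDeBruijn_iff_count hn).2 ⟨by simpa using hx.1, fun w hw => ?_⟩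
  have hshift (i : ℕ) :
      window (periodicExt (x.rotate r)) i n = window (periodicExt x) (r + i) n :=
    window_eq_window_iff.2 fun k _ => by rw [periodicExt_rotate, add_assoc]
  simp only [hshift, List.length_rotate]
  rw [← hx.count_window hn hw]
  exact count_add_left_of_periodic (p := fun i => window (periodicExt x) i n = w)
    (fun i => congrArg (· = w) (periodic_window (periodicExt_periodic x) i)) r

lemma IsDeBruijn.modEq_of_window_eq (hx : IsDeBruijn n x) (hn : 0 < n) {i j : ℕ}
    (h : window (periodicExt x) i n = window (periodicExt x) j n) : i ≡ j [MOD 2 ^ n] := by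
  have hmod (k : ℕ) : window (periodicExt x) (k % 2 ^ n) n = window (periodicExt x) k n := by
    rw [← hx.1]
    exact (periodic_window (periodicExt_periodic x)).map_mod_nat k
  have hlt (k : ℕ) : k % 2 ^ n < x.length := by rw [hx.1]; exact Nat.mod_lt k (by positivity)
  exact (count_eq_one_iff_existsUnique.1 (hx.count_window hn length_window)).unique
    ⟨hlt i, hmod i⟩ ⟨hlt j, (hmod j).trans h.symm⟩

end IsDeBruijn

section PreferZero

/-- The prefer-zero greedy sequence: after `d` ones, each new bit is `0` unless the factor of
length `d + 1` that this would complete has already occurred. -/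
noncomputable def preferZero (d i : ℕ) : Bool :=
  open Classical in
  if i < d then true
  else decide (∃ m : Fin (i - d),
    (∀ k : Fin d, preferZero d (m + k) = preferZero d (i - d + k)) ∧ preferZero d (m + d) = false)
termination_by i
decreasing_by all_goals omega

variable {d : ℕ}

lemma preferZero_of_lt {i : ℕ} (hi : i < d) : preferZero d i = true := by
  rw [preferZero, if_pos hi]

lemma preferZero_add_eq_true_iff {s : ℕ} :
    preferZero d (s + d) = true ↔ ∃ m < s,
      window (preferZero d) m d = window (preferZero d) s d ∧ preferZero d (m + d) = false := by
  rw [preferZero, if_neg (by omega), decide_eq_true_iff]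
  simp only [window_eq_window_iff, Nat.add_sub_cancel, Fin.forall_iff, Fin.exists_iff, exists_prop]

lemma preferZero_eq_false {i : ℕ} (h₁ : d ≤ i) (h₂ : i ≤ 2 * d) : preferZero d i = false := by
  obtain ⟨s, rfl⟩ := Nat.exists_eq_add_of_le' h₁
  have hd : preferZero d d = false := by
    have h := preferZero_add_eq_true_iff (d := d) (s := 0)
    simpa using h
  rw [← Bool.not_eq_true, preferZero_add_eq_true_iff]
  rintro ⟨m, hm, hv, -⟩
  have h := window_eq_window_iff.1 hv (d - s) (by omega)
  rw [show s + (d - s) = d by omega, hd, preferZero_of_lt (by omega)] at h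
  contradiction

lemma preferZero_two_mul_add_one : preferZero d (2 * d + 1) = true := by
  rw [show 2 * d + 1 = d + 1 + d by ring, preferZero_add_eq_true_iff]
  refine ⟨d, d.lt_succ_self, window_eq_window_iff.2 fun k hk => ?_,
    preferZero_eq_false (by omega) (by omega)⟩
  rw [preferZero_eq_false (by omega) (by omega), preferZero_eq_false (by omega) (by omega)]

lemma preferZero_eq_false_of_two_mul_add_one_lt {i : ℕ} (h₁ : 2 * d + 1 < i) (h₂ : i ≤ 3 * d) :
    preferZero d i = false := by
  obtain ⟨s, rfl⟩ := Nat.exists_eq_add_of_le' (show d ≤ i by omega)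
  rw [← Bool.not_eq_true, preferZero_add_eq_true_iff]
  rintro ⟨m, hm, hv, -⟩
  rw [window_eq_window_iff] at hv
  have hstart := hv 0 (by omega)
  rw [preferZero_eq_false (i := s + 0) (by omega) (by omega)] at hstart
  have hmd : d ≤ m := by
    by_contra! h
    simp [preferZero_of_lt h] at hstart
  have hone := hv (2 * d + 1 - s) (by omega)
  rw [show s + (2 * d + 1 - s) = 2 * d + 1 by omega, preferZero_two_mul_add_one,
    preferZero_eq_false (by omega) (by omega)] at hone
  contradiction

lemma exists_injOn_Iio_and_eq {α : Type*} {f : ℕ → α} (hf : ¬ Function.Injective f) :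
    ∃ N, Set.InjOn f (Set.Iio N) ∧ ∃ m < N, f m = f N := by
  classical
  have hex : ∃ N, ∃ m < N, f m = f N := by
    obtain ⟨i, j, hij, hne⟩ := Function.not_injective_iff.1 hf
    rcases hne.lt_or_gt with h | h
    exacts [⟨j, i, h, hij⟩, ⟨i, j, h, hij.symm⟩]
  refine ⟨Nat.find hex, fun i hi j hj hij => ?_, Nat.find_spec hex⟩
  by_contra hne
  rcases Ne.lt_or_gt hne with h | h
  exacts [Nat.find_min hex hj ⟨i, h, hij⟩, Nat.find_min hex hi ⟨j, h, hij.symm⟩]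

/-- The two occurrences of `v` cannot have the same predecessor. -/
lemma exists_window_eq_cons_of_ne {a : ℕ → Bool} {N s t : ℕ} {v : List Bool}
    (ha : Set.InjOn (window a · (d + 1)) (Set.Iio N)) (hs : 0 < s) (ht : 0 < t) (hsN : s ≤ N)
    (htN : t ≤ N) (hst : s ≠ t) (hsv : window a s d = v) (htv : window a t d = v) (b : Bool) :
    ∃ r < N, window a r (d + 1) = b :: v := by
  obtain ⟨s, rfl⟩ := Nat.exists_eq_succ_of_ne_zero hs.ne'
  obtain ⟨t, rfl⟩ := Nat.exists_eq_succ_of_ne_zero ht.ne'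
  have hne : a s ≠ a t := fun h => hst <| congrArg Nat.succ <| ha hsN htN <| by
    simp only [window_succ', h, hsv, htv]
  have hb : a s = b ∨ a t = b := by revert hne; cases a s <;> cases a t <;> cases b <;> simp
  rcases hb with h | h
  · exact ⟨s, hsN, window_succ_eq_cons_iff.2 ⟨h, hsv⟩⟩
  · exact ⟨t, htN, window_succ_eq_cons_iff.2 ⟨h, htv⟩⟩

/-- The word `v` is exhausted before time `N` if both of its one-bit extensions have occurred in
`preferZero d` before position `N`, so that no bit can be appended to `v` without a repetition. -/
def Exhausted (d N : ℕ) (v : List Bool) : Prop :=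
  ∀ b, ∃ s < N, window (preferZero d) s (d + 1) = v ++ [b]

variable {N : ℕ} {v : List Bool}

lemma exhausted_of_window_eq_append_true {s : ℕ} (hs : s < N)
    (h : window (preferZero d) s (d + 1) = v ++ [true]) : Exhausted d N v := by
  obtain ⟨hsv, hs₁⟩ := window_succ_eq_append_iff.1 h
  obtain ⟨m, hm, hmv, hm₀⟩ := preferZero_add_eq_true_iff.1 hs₁
  rintro (_ | _)
  exacts [⟨m, hm.trans hs, window_succ_eq_append_iff.2 ⟨hmv.trans hsv, hm₀⟩⟩, ⟨s, hs, h⟩]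

lemma Exhausted.exists_ne (hv : Exhausted d N v) :
    ∃ s < N, ∃ t < N, s ≠ t ∧ window (preferZero d) s d = v ∧ window (preferZero d) t d = v := by
  obtain ⟨s, hs, hsw⟩ := hv false
  obtain ⟨t, ht, htw⟩ := hv true
  refine ⟨s, hs, t, ht, ?_, (window_succ_eq_append_iff.1 hsw).1,
    (window_succ_eq_append_iff.1 htw).1⟩
  rintro rfl
  simp [hsw] at htw

lemma window_preferZero_zero : window (preferZero d) 0 d = List.replicate d true :=
  window_eq_replicate_iff.2 fun _ hk => preferZero_of_lt (by omega)

/-- The greedy process can only get stuck at its seed `1^d`: any other word is entered at most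
twice without repetition, hence still has a free exit when it is entered. -/
lemma window_eq_replicate_of_first_repeat
    (hinj : Set.InjOn (window (preferZero d) · (d + 1)) (Set.Iio N))
    (hex : Exhausted d N (window (preferZero d) N d)) :
    window (preferZero d) N d = List.replicate d true := by
  by_contra hne
  obtain ⟨s, hs, t, ht, hst, hsv, htv⟩ := hex.exists_ne
  have hpos {r : ℕ} (h : window (preferZero d) r d = window (preferZero d) N d) : 0 < r := by
    refine r.eq_zero_or_pos.resolve_left ?_
    rintro rfl
    exact hne (h.symm.trans window_preferZero_zero)
  obtain ⟨M, rfl⟩ : ∃ M, N = M + 1 := ⟨N - 1, by omega⟩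
  obtain ⟨r, hr, hrM⟩ := exists_window_eq_cons_of_ne (hinj.mono (Set.Iio_subset_Iio M.le_succ))
    (hpos hsv) (hpos htv) (by omega) (by omega) hst hsv htv (preferZero d M)
  exact hr.ne (hinj (hr.trans M.lt_succ_self) M.lt_succ_self (hrM.trans window_succ'.symm))

lemma exhausted_window_of_repeat {m : ℕ} (hm : m < N)
    (h : window (preferZero d) m (d + 1) = window (preferZero d) N (d + 1)) :
    Exhausted d N (window (preferZero d) N d) := by
  obtain ⟨hv, hb⟩ := window_succ_eq_append_iff.1 (h.trans window_succ)
  have hN : preferZero d (N + d) = true := by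
    by_contra h₀
    exact h₀ (preferZero_add_eq_true_iff.2 ⟨m, hm, hv, by simpa [hb] using h₀⟩)
  exact exhausted_of_window_eq_append_true hm (window_succ_eq_append_iff.2 ⟨hv, hb.trans hN⟩)

/-- An occurrence at position `0` has no predecessor; the return to the seed at position `N`
replaces it. -/
lemma Exhausted.exists_window_eq_cons (hv : Exhausted d N v)
    (hinj : Set.InjOn (window (preferZero d) · (d + 1)) (Set.Iio N))
    (hN : window (preferZero d) N d = List.replicate d true) (b : Bool) :
    ∃ r < N, window (preferZero d) r (d + 1) = b :: v := by
  obtain ⟨s, hs, t, ht, hst, hsv, htv⟩ := hv.exists_ne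
  have hret {r : ℕ} (hr : r < N) (hrv : window (preferZero d) r d = v) :
      let r' := if r = 0 then N else r
      0 < r' ∧ r' ≤ N ∧ window (preferZero d) r' d = v := by
    split_ifs with h
    · subst h
      exact ⟨hr, le_rfl, by rw [hN, ← hrv, window_preferZero_zero]⟩
    · exact ⟨by omega, hr.le, hrv⟩
  obtain ⟨hs₀, hsN, hsv⟩ := hret hs hsv
  obtain ⟨ht₀, htN, htv⟩ := hret ht htv
  exact exists_window_eq_cons_of_ne hinj hs₀ ht₀ hsN htN (by split_ifs <;> omega) hsv htv b

/-- Exhaustion propagates backwards along `1`-edges: if `v1` is exhausted then `bv1` has occurred,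
so `bv` is exhausted by preference for `0`. All words lead to `1^d` along such edges. -/
lemma exhausted_append_replicate
    (hinj : Set.InjOn (window (preferZero d) · (d + 1)) (Set.Iio N))
    (hN : window (preferZero d) N d = List.replicate d true)
    (hd : Exhausted d N (List.replicate d true)) (u : List Bool) {k : ℕ} (hk : u.length + k = d) :
    Exhausted d N (u ++ List.replicate k true) := by
  induction u generalizing k with
  | nil => simpa [← hk] using hd
  | cons b u ih =>
    have hu : Exhausted d N (u ++ List.replicate (k + 1) true) := ih (by simp at hk; omega)
    obtain ⟨r, hr, hrw⟩ := hu.exists_window_eq_cons hinj hN b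
    refine exhausted_of_window_eq_append_true hr (hrw.trans ?_)
    simp [List.replicate_succ']

lemma eq_card_pow_of_injOn_of_forall_exists {α : Type*} [Fintype α] {f : ℕ → List α} {m : ℕ}
    (hf : ∀ s, (f s).length = m) (hinj : Set.InjOn f (Set.Iio N))
    (hsurj : ∀ w : List α, w.length = m → ∃ s < N, f s = w) : N = Fintype.card α ^ m := by
  let F : Fin N → List.Vector α m := fun s => ⟨f s, hf s⟩
  have hF : Function.Bijective F := by
    refine ⟨fun s t h => Fin.ext (hinj s.2 t.2 (congrArg Subtype.val h)), fun w => ?_⟩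
    obtain ⟨s, hs, h⟩ := hsurj w.1 w.2
    exact ⟨⟨s, hs⟩, Subtype.ext h⟩
  simpa using Fintype.card_of_bijective hF

lemma preferZero_full (d : ℕ) :
    Set.InjOn (window (preferZero d) · (d + 1)) (Set.Iio (2 ^ (d + 1))) ∧
      (∀ w : List Bool, w.length = d + 1 →
        ∃ s < 2 ^ (d + 1), window (preferZero d) s (d + 1) = w) ∧
      window (preferZero d) (2 ^ (d + 1)) d = List.replicate d true := by
  have hrep : ¬ Function.Injective (window (preferZero d) · (d + 1)) := fun h =>
    Set.infinite_range_of_injective h <|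
      (List.finite_length_eq Bool (d + 1)).subset <| by rintro _ ⟨s, rfl⟩; exact length_window
  obtain ⟨N, hinj, m, hm, hmN⟩ := exists_injOn_Iio_and_eq hrep
  have hex := exhausted_window_of_repeat hm hmN
  have hN := window_eq_replicate_of_first_repeat hinj hex
  have hall (w : List Bool) (hw : w.length = d + 1) :
      ∃ s < N, window (preferZero d) s (d + 1) = w := by
    obtain ⟨v, b, rfl⟩ := (List.eq_nil_or_concat w).resolve_left (by rintro rfl; simp at hw)
    have hv := exhausted_append_replicate hinj hN (hN ▸ hex) v (k := 0) (by simpa using hw)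
    simpa using hv b
  obtain rfl : N = 2 ^ (d + 1) := by
    simpa using eq_card_pow_of_injOn_of_forall_exists (fun _ => length_window) hinj hall
  exact ⟨hinj, hall, hN⟩

end PreferZero

section Existence

variable {a : ℕ → Bool} {d n : ℕ}

/-- The word `0^n 1 0^(n - 2)`: a rotation of the greedy de Bruijn string of order `n` starts with
it, and no de Bruijn string of order `n` starts with a lexicographically smaller word of the same
length. -/
def initialWord (n : ℕ) : List Bool :=
  List.replicate n false ++ true :: List.replicate (n - 2) false

lemma window_eq_initialWord_iff :
    window a 0 (initialWord n).length = initialWord n ↔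
      (∀ i < n, a i = false) ∧ a n = true ∧ ∀ k < n - 2, a (n + 1 + k) = false := by
  have hlen : (initialWord n).length = n + (n - 2 + 1) := by simp [initialWord]
  rw [hlen, window_add, initialWord, List.append_eq_append_iff_of_size_eq_left (by simp)]
  simp only [window_succ_eq_cons_iff, window_eq_replicate_iff, zero_add]

lemma periodicExt_window_preferZero {i : ℕ} (hi : i < 2 ^ (d + 1) + d) :
    periodicExt (window (preferZero d) 0 (2 ^ (d + 1))) i = preferZero d i := by
  set x := window (preferZero d) 0 (2 ^ (d + 1)) with hx
  have hxl : x.length = 2 ^ (d + 1) := length_window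
  have hd : d + 1 < 2 ^ (d + 1) := Nat.lt_two_pow_self
  have hlow {i : ℕ} (hi : i < 2 ^ (d + 1)) : periodicExt x i = preferZero d i := by
    rw [← getD_eq_periodicExt (by omega)]
    simp [hx, window, hi]
  rcases lt_or_ge i (2 ^ (d + 1)) with h | h
  · exact hlow h
  · obtain ⟨k, rfl⟩ := Nat.exists_eq_add_of_le h
    rw [window_eq_replicate_iff.1 (preferZero_full d).2.2 k (by omega), add_comm, ← hxl,
      periodicExt_periodic, hlow (by omega), preferZero_of_lt (by omega)]

lemma isDeBruijn_window_preferZero (d : ℕ) :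
    IsDeBruijn (d + 1) (window (preferZero d) 0 (2 ^ (d + 1))) := by
  obtain ⟨hinj, hall, -⟩ := preferZero_full d
  have hwindow {s : ℕ} (hs : s < 2 ^ (d + 1)) :
      window (periodicExt (window (preferZero d) 0 (2 ^ (d + 1)))) s (d + 1) =
        window (preferZero d) s (d + 1) :=
    window_eq_window_iff.2 fun k hk => periodicExt_window_preferZero (by omega)
  refine (isDeBruijn_iff_count d.succ_pos).2 ⟨length_window, fun w hw => ?_⟩
  obtain ⟨s, hs, hsw⟩ := hall w hw
  rw [length_window, count_eq_one_iff_existsUnique]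
  refine ⟨s, ⟨hs, (hwindow hs).trans hsw⟩, fun t ⟨ht, htw⟩ => hinj ht hs ?_⟩
  exact (hwindow ht).symm.trans (htw.trans hsw.symm)

lemma exists_isDeBruijn_initialWord_prefix (hn : 2 ≤ n) :
    ∃ x, IsDeBruijn n x ∧ initialWord n <+: x := by
  obtain ⟨d, rfl⟩ : ∃ d, n = d + 1 := ⟨n - 1, by omega⟩
  refine ⟨(window (preferZero d) 0 (2 ^ (d + 1))).rotate d,
    (isDeBruijn_window_preferZero d).rotate d.succ_pos d, ?_⟩
  have hd : d < 2 ^ d := Nat.lt_two_pow_self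
  have hbits {i : ℕ} (hi : i < 2 ^ (d + 1)) :
      periodicExt ((window (preferZero d) 0 (2 ^ (d + 1))).rotate d) i = preferZero d (d + i) := by
    rw [periodicExt_rotate, periodicExt_window_preferZero (by omega)]
  refine prefix_iff_window_periodicExt.2 ⟨by simp [initialWord]; omega, ?_⟩
  refine window_eq_initialWord_iff.2 ⟨fun i hi => ?_, ?_, fun k hk => ?_⟩
  · rw [hbits (by omega), preferZero_eq_false (by omega) (by omega)]
  · rw [hbits (by omega), show d + (d + 1) = 2 * d + 1 by ring, preferZero_two_mul_add_one]
  · rw [hbits (by omega), preferZero_eq_false_of_two_mul_add_one_lt (by omega) (by omega)]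

end Existence

section Least

variable {n : ℕ} {x y : List Bool}

lemma exists_isDeBruijn_forall_le (hn : 0 < n) :
    ∃ x, IsDeBruijn n x ∧ ∀ y, IsDeBruijn n y → x ≤ y := by
  obtain ⟨d, rfl⟩ : ∃ d, n = d + 1 := ⟨n - 1, by omega⟩
  have hfin : {x | IsDeBruijn (d + 1) x}.Finite :=
    (List.finite_length_eq Bool (2 ^ (d + 1))).subset fun _ hx => hx.1
  exact Set.exists_min_image _ id hfin ⟨_, isDeBruijn_window_preferZero d⟩

lemma isDeBruijn_db (hn : 0 < n) : IsDeBruijn n (db n) := by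
  rw [db, dif_pos (exists_isDeBruijn_forall_le hn)]
  exact (exists_isDeBruijn_forall_le hn).choose_spec.1

lemma db_le (hn : 0 < n) (hy : IsDeBruijn n y) : db n ≤ y := by
  rw [db, dif_pos (exists_isDeBruijn_forall_le hn)]
  exact (exists_isDeBruijn_forall_le hn).choose_spec.2 y hy

lemma cons_le_cons_iff {α : Type*} [LinearOrder α] {a b : α} {l l' : List α} :
    a :: l ≤ b :: l' ↔ a < b ∨ a = b ∧ l ≤ l' := by
  rw [← not_lt, ← not_lt (a := l'), List.cons_lt_cons_iff]
  rcases lt_trichotomy a b with h | rfl | h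
  · simp [h, h.not_gt, h.ne']
  · simp
  · simp [h, h.not_gt, h.ne']

lemma exists_eq_replicate_false_append_of_le {m : ℕ} (h : x ≤ List.replicate m false ++ y)
    (hm : m ≤ x.length) : ∃ z, x = List.replicate m false ++ z ∧ z ≤ y := by
  induction m generalizing x with
  | zero => exact ⟨x, rfl, h⟩
  | succ m ih =>
    obtain ⟨c, x, rfl⟩ := List.exists_cons_of_length_pos (by omega : 0 < x.length)
    rw [List.replicate_succ, List.cons_append, cons_le_cons_iff] at h
    obtain ⟨rfl, hx⟩ : c = false ∧ x ≤ List.replicate m false ++ y :=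
      h.resolve_left (by simp [Bool.lt_iff])
    obtain ⟨z, rfl, hz⟩ := ih hx (by simpa using hm)
    exact ⟨z, rfl, hz⟩

lemma IsDeBruijn.not_replicate_succ_prefix (hx : IsDeBruijn n x) (hn : 0 < n) (c : Bool) :
    ¬ List.replicate (n + 1) c <+: x := fun h => by
  have hc := (prefix_iff_window_periodicExt.1 h).2
  rw [List.length_replicate, window_eq_replicate_iff] at hc
  have hmod : 0 ≡ 1 [MOD 2 ^ n] := hx.modEq_of_window_eq hn <| window_eq_window_iff.2 fun k hk => by
    rw [hc k (by omega), ← hc (1 + k) (by omega), zero_add]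
  rw [Nat.modEq_iff_dvd' zero_le_one, Nat.sub_zero, Nat.dvd_one] at hmod
  exact (Nat.one_lt_two_pow hn.ne').ne' hmod

lemma initialWord_prefix_db (hn : 2 ≤ n) : initialWord n <+: db n := by
  have hn₀ : 0 < n := by omega
  have hdb := isDeBruijn_db hn₀
  obtain ⟨_, hy, r, rfl⟩ := exists_isDeBruijn_initialWord_prefix hn
  have hlen : (initialWord n).length ≤ (db n).length := by
    rw [hdb.1, ← hy.1]; simp
  have hle := db_le hn₀ hy
  simp only [initialWord, List.append_assoc, List.cons_append, List.length_append,
    List.length_replicate, List.length_cons] at hle hlen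
  obtain ⟨z, hz, hzle⟩ := exists_eq_replicate_false_append_of_le hle (by omega)
  have hzlen : n - 2 + 1 ≤ z.length := by
    rw [hz, List.length_append, List.length_replicate] at hlen; omega
  obtain ⟨c, z, rfl⟩ := List.exists_cons_of_length_pos (by omega : 0 < z.length)
  obtain rfl : c = true := by
    by_contra hc
    refine hdb.not_replicate_succ_prefix hn₀ false ⟨z, ?_⟩
    rw [hz, List.replicate_succ', Bool.eq_false_iff.2 hc, List.append_assoc, List.singleton_append]
  have hzle : z ≤ List.replicate (n - 2) false ++ r := by
    simpa [cons_le_cons_iff] using hzle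
  obtain ⟨z, rfl, -⟩ := exists_eq_replicate_false_append_of_le hzle (by simpa using hzlen)
  exact ⟨z, by simp [initialWord, hz]⟩

end Least

section Occurrences

variable {n i : ℕ} {x : List Bool}

lemma IsDeBruijn.window_two_pow_sub_one (hx : IsDeBruijn n x) (hn : 0 < n)
    (h : initialWord n <+: x) :
    window (periodicExt x) (2 ^ n - 1) n = true :: List.replicate (n - 1) false := by
  obtain ⟨hzero, -⟩ := window_eq_initialWord_iff.1 (prefix_iff_window_periodicExt.1 h).2
  obtain ⟨m, rfl⟩ : ∃ m, n = m + 1 := ⟨n - 1, by omega⟩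
  have hpow : 1 < 2 ^ (m + 1) := Nat.one_lt_two_pow hn.ne'
  have hperiod : Function.Periodic (periodicExt x) (2 ^ (m + 1)) := hx.1 ▸ periodicExt_periodic x
  have htail : window (periodicExt x) (2 ^ (m + 1) - 1 + 1) m = List.replicate m false :=
    window_eq_replicate_iff.2 fun k hk => by
      rw [Nat.sub_add_cancel hpow.le, add_comm, hperiod, hzero k (by omega)]
  refine window_succ_eq_cons_iff.2 ⟨?_, htail⟩
  by_contra hfalse
  have hstart : window (periodicExt x) 0 (m + 1) = List.replicate (m + 1) false :=
    window_eq_replicate_iff.2 fun k hk => by rw [zero_add, hzero k hk]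
  have hwin : window (periodicExt x) (2 ^ (m + 1) - 1) (m + 1) = List.replicate (m + 1) false :=
    window_succ_eq_cons_iff.2 ⟨Bool.eq_false_iff.2 hfalse, htail⟩
  have hmod : 2 ^ (m + 1) - 1 ≡ 0 [MOD 2 ^ (m + 1)] :=
    hx.modEq_of_window_eq hn (hwin.trans hstart.symm)
  exact (Nat.sub_pos_of_lt hpow).ne' (hmod.eq_of_lt_of_lt (by omega) (by omega))

lemma window_periodicExt_sub_one (hn : 2 ≤ n) (h : initialWord n <+: x) :
    window (periodicExt x) (n - 1) n = false :: true :: List.replicate (n - 2) false := by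
  obtain ⟨hzero, hone, hzero'⟩ := window_eq_initialWord_iff.1 (prefix_iff_window_periodicExt.1 h).2
  obtain ⟨m, rfl⟩ := Nat.exists_eq_add_of_le' hn
  exact window_succ_eq_cons_iff.2 ⟨hzero _ (by omega), window_succ_eq_cons_iff.2 ⟨hone,
    window_eq_replicate_iff.2 hzero'⟩⟩

lemma IsDeBruijn.modEq_sub_one_of_window_eq (hx : IsDeBruijn n x) (hn : 2 ≤ n)
    (h : initialWord n <+: x)
    (hi : window (periodicExt x) i n = false :: true :: List.replicate (n - 2) false) :
    i ≡ n - 1 [MOD 2 ^ n] :=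
  hx.modEq_of_window_eq (by omega) (hi.trans (window_periodicExt_sub_one hn h).symm)

lemma IsDeBruijn.periodicExt_add_of_window_eq (hx : IsDeBruijn n x) (hn : 2 ≤ n)
    (h : initialWord n <+: x)
    (hi : window (periodicExt x) i n = false :: true :: List.replicate (n - 2) false) :
    periodicExt x (i + n) = true := by
  have hmod := hx.modEq_sub_one_of_window_eq hn h hi
  by_contra hfalse
  have hend := hx.window_two_pow_sub_one (by omega) h
  obtain ⟨m, rfl⟩ := Nat.exists_eq_add_of_le' hn
  have hnext : window (periodicExt x) (i + 1) (m + 2) = true :: List.replicate (m + 1) false := by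
    rw [List.replicate_succ', ← List.cons_append]
    refine window_succ_eq_append_iff.2 ⟨(window_succ_eq_cons_iff.1 hi).2, ?_⟩
    rwa [add_assoc, add_comm 1, ← Bool.not_eq_true]
  have hmod' : m + 2 ≡ 2 ^ (m + 2) - 1 [MOD 2 ^ (m + 2)] :=
    (hmod.add_right 1).symm.trans (hx.modEq_of_window_eq (by omega) (hnext.trans hend.symm))
  have hm : m < 2 ^ m := Nat.lt_two_pow_self
  have hpow : 2 ^ (m + 2) = 4 * 2 ^ m := by ring
  have heq := hmod'.eq_of_lt_of_lt (by omega) (by omega)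
  omega

lemma IsDeBruijn.periodicExt_add_succ_of_window_eq (hx : IsDeBruijn n x) (hn : 3 ≤ n)
    (h : initialWord n <+: x)
    (hi : window (periodicExt x) i n = false :: true :: List.replicate (n - 2) false) :
    periodicExt x (i + n + 1) = true := by
  have hn₂ : 2 ≤ n := by omega
  have hmod := hx.modEq_sub_one_of_window_eq hn₂ h hi
  have hone := hx.periodicExt_add_of_window_eq hn₂ h hi
  obtain ⟨hzero, hone', hzero'⟩ := window_eq_initialWord_iff.1 (prefix_iff_window_periodicExt.1 h).2
  by_contra hfalse
  obtain ⟨m, rfl⟩ := Nat.exists_eq_add_of_le' hn₂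
  have hword (j : ℕ) (hz : window (periodicExt x) (j + 2) m = List.replicate m false)
      (h₁ : periodicExt x (j + (m + 2)) = true) (h₀ : periodicExt x (j + (m + 2) + 1) = false) :
      window (periodicExt x) (j + 2) (m + 2) = List.replicate m false ++ [true] ++ [false] := by
    rw [window_succ_eq_append_iff, window_succ_eq_append_iff]
    exact ⟨⟨hz, by rwa [add_assoc, add_comm 2]⟩, by rwa [add_assoc, add_left_comm 2]⟩
  have hi₂ := (window_succ_eq_cons_iff.1 (window_succ_eq_cons_iff.1 hi).2).2
  have hnext := hword i hi₂ hone (Bool.eq_false_iff.2 hfalse)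
  have hstart := hword 0 (window_eq_replicate_iff.2 fun k hk => hzero _ (by omega))
    (by simpa using hone') (by simpa using hzero' 0 (by omega))
  have hmod' : i ≡ 0 [MOD 2 ^ (m + 2)] :=
    Nat.ModEq.add_right_cancel' 2 (hx.modEq_of_window_eq (by omega) (hnext.trans hstart.symm))
  have hm : m + 2 < 2 ^ (m + 2) := Nat.lt_two_pow_self
  have heq := (hmod.symm.trans hmod').eq_of_lt_of_lt (by omega) (by omega)
  omega

lemma IsDeBruijn.window_eq_append_true_iff (hx : IsDeBruijn n x) (hn : 2 ≤ n)
    (h : initialWord n <+: x) :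
    window (periodicExt x) i (n + 1) =
        [false, true] ++ List.replicate (n - 2) false ++ [true] ↔
      window (periodicExt x) i n = false :: true :: List.replicate (n - 2) false := by
  rw [window_succ_eq_append_iff]
  exact and_iff_left_of_imp (hx.periodicExt_add_of_window_eq hn h)

end Occurrences

theorem stmt8_general (n t : ℕ) (hn : 3 ≤ n) :
    (∀ p : ℕ,
      ((List.replicate t (db n)).flatten.drop p).take (n + 1) =
        [false, true] ++ List.replicate (n - 2) false ++ [true] →
      p + (n + 1) < (List.replicate t (db n)).flatten.length →
      (List.replicate t (db n)).flatten.getD (p + (n + 1)) false = true) ∧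
    occ ([false, true] ++ List.replicate (n - 2) false ++ [true])
      ((List.replicate t (db n)).flatten ++ (List.replicate t (db n)).flatten.take n) = t := by
  have hn₀ : 0 < n := by omega
  have hn₂ : 2 ≤ n := by omega
  have hdb := isDeBruijn_db hn₀
  have hpre := initialWord_prefix_db hn₂
  have hbits : ∀ i < (List.replicate t (db n)).flatten.length,
      (List.replicate t (db n)).flatten.getD i false = periodicExt (db n) i :=
    fun i hi => getD_flatten_replicate t (by simpa using hi)
  constructor
  · intro p hp hlt
    rw [take_drop_eq_window hbits hlt.le, hdb.window_eq_append_true_iff hn₂ hpre] at hp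
    rw [hbits _ hlt, ← add_assoc]
    exact hdb.periodicExt_add_succ_of_window_eq hn hpre hp
  · have hle : n ≤ (db n).length := hdb.1 ▸ Nat.lt_two_pow_self.le
    rw [occ_flatten_replicate_append_take t (by simp; omega) hle]
    simp only [hdb.window_eq_append_true_iff hn₂ hpre]
    rw [hdb.count_window hn₀ (by simp; omega), mul_one]

/-- For every odd `n ≥ 3`: every occurrence of `0·1·0^{n-2}·1` in `S_n = db(n)^n` that has
a following bit inside `S_n` is followed by `1`; moreover `0·1·0^{n-2}·1` occurs exactly
`n` times in `S_n` viewed cyclically, i.e. as a substring of `S_n ++ S_n[0..n-1]`. -/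
theorem stmt8 (n : ℕ) (hn : 3 ≤ n) (hodd : Odd n) :
    (∀ p : ℕ,
      ((Sodd n).drop p).take (n + 1) = [false, true] ++ List.replicate (n - 2) false ++ [true] →
      p + (n + 1) < (Sodd n).length →
      (Sodd n).getD (p + (n + 1)) false = true) ∧
    occ ([false, true] ++ List.replicate (n - 2) false ++ [true])
      (Sodd n ++ (Sodd n).take n) = n :=
  stmt8_general n n hn
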